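/- Let d ≥ 1 and let θ_1, …, θ_d be real numbers such that π, θ_1, …, θ_d are linearly independent over ℚ. Let α, β_1, …, β_d, ω_1, …, ω_d be real numbers such that α ≠ 0 or some β_j ≠ 0, and let (x_k)_{k≥1} be a sequence of real numbers with x_k → 0. Then the limit as n → ∞ of (1/n)·#{1 ≤ k ≤ n : α + ∑_{j=1}^{d} β_j sin(kθ_j + ω_j) > x_k} exists and equals (1/(2π)^d) times the Lebesgue measure of {y ∈ [0, 2π]^d : α + ∑_{j=1}^{d} β_j sin(y_j) > 0}. -/

import Mathlib

open MeasureTheory Filter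
open scoped Topology

/-- The Cesàro averages of the powers of a unit complex number other than `1` tend to `0`. -/
lemma tendsto_average_pow_zero {z : ℂ} (hz : ‖z‖ = 1) (hz1 : z ≠ 1) :
    Tendsto (fun n : ℕ => (n⁻¹ : ℝ) • ∑ k ∈ Finset.range n, z ^ k) atTop (𝓝 0) := by
  refine squeeze_zero_norm (a := fun n : ℕ => (n⁻¹ : ℝ) * (2 / ‖z - 1‖)) (fun n => ?_) ?_
  · rw [norm_smul, geom_sum_eq hz1, norm_div, Real.norm_of_nonneg (by positivity)]
    gcongr
    calc ‖z ^ n - 1‖ ≤ ‖z ^ n‖ + ‖(1 : ℂ)‖ := norm_sub_le _ _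
      _ = 2 := by rw [norm_pow, hz]; norm_num
  · simpa using tendsto_inv_atTop_nhds_zero_nat.mul_const (2 / ‖z - 1‖)

/-- Weyl's criterion: convergence of averages along a sequence to the integral may be tested
on a family of continuous functions whose span is dense. -/
lemma tendsto_average_of_span_dense {K Ω : Type*} [TopologicalSpace K] [CompactSpace K]
    [MeasurableSpace Ω] (ν : Measure Ω) [IsProbabilityMeasure ν] (q : Ω → K)
    (hq : ∀ f : C(K, ℂ), Integrable (fun y => f (q y)) ν) (p : ℕ → K) {S : Set C(K, ℂ)}
    (hS : (Submodule.span ℂ S).topologicalClosure = ⊤)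
    (h : ∀ f ∈ S, Tendsto (fun n : ℕ => (n⁻¹ : ℝ) • ∑ k ∈ Finset.range n, f (p k)) atTop
      (𝓝 (∫ y, f (q y) ∂ν))) (f : C(K, ℂ)) :
    Tendsto (fun n : ℕ => (n⁻¹ : ℝ) • ∑ k ∈ Finset.range n, f (p k)) atTop
      (𝓝 (∫ y, f (q y) ∂ν)) := by
  have hspan : ∀ g ∈ Submodule.span ℂ S,
      Tendsto (fun n : ℕ => (n⁻¹ : ℝ) • ∑ k ∈ Finset.range n, g (p k)) atTop
        (𝓝 (∫ y, g (q y) ∂ν)) := by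
    intro g hg
    induction hg using Submodule.span_induction with
    | mem g hg => exact h g hg
    | zero => simp
    | add g₁ g₂ _ _ h₁ h₂ =>
      simpa [Finset.sum_add_distrib, integral_add (hq g₁) (hq g₂)] using h₁.add h₂
    | smul c g _ hg =>
      simpa [← Finset.mul_sum, integral_const_mul, mul_left_comm] using hg.const_mul c
  rw [Metric.tendsto_atTop]
  intro ε hε
  have hf : f ∈ closure (Submodule.span ℂ S : Set C(K, ℂ)) := by
    rw [← Submodule.topologicalClosure_coe, hS]; trivial
  obtain ⟨g, hg, hfg⟩ := Metric.mem_closure_iff.1 hf (ε / 3) (by positivity)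
  have hpt : ∀ x, ‖f x - g x‖ ≤ ε / 3 := fun x => by
    rw [← dist_eq_norm]; exact (ContinuousMap.dist_apply_le_dist x).trans hfg.le
  obtain ⟨N, hN⟩ := Metric.tendsto_atTop.1 (hspan g hg) (ε / 3) (by positivity)
  refine ⟨N, fun n hn => ?_⟩
  have havg : dist ((n⁻¹ : ℝ) • ∑ k ∈ Finset.range n, f (p k))
      ((n⁻¹ : ℝ) • ∑ k ∈ Finset.range n, g (p k)) ≤ ε / 3 := by
    rw [dist_eq_norm, ← smul_sub, ← Finset.sum_sub_distrib, norm_smul,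
      Real.norm_of_nonneg (by positivity)]
    calc (n⁻¹ : ℝ) * ‖∑ k ∈ Finset.range n, (f (p k) - g (p k))‖
        ≤ (n⁻¹ : ℝ) * (n * (ε / 3)) := by
          gcongr
          simpa using norm_sum_le_of_le (Finset.range n) fun k _ => hpt (p k)
      _ ≤ ε / 3 := by
          rw [← mul_assoc]
          exact mul_le_of_le_one_left (by positivity) inv_mul_le_one
  have hint : dist (∫ y, g (q y) ∂ν) (∫ y, f (q y) ∂ν) ≤ ε / 3 := by
    rw [dist_comm, dist_eq_norm, ← integral_sub (hq f) (hq g)]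
    simpa using norm_integral_le_of_norm_le_const (μ := ν) (.of_forall fun y => hpt (q y))
  have := dist_triangle4 ((n⁻¹ : ℝ) • ∑ k ∈ Finset.range n, f (p k))
    ((n⁻¹ : ℝ) • ∑ k ∈ Finset.range n, g (p k)) (∫ y, g (q y) ∂ν) (∫ y, f (q y) ∂ν)
  linarith [hN n hn]

/-- If the empirical characteristic functions of a real sequence converge to that of `P`, then
the sequence visits every set with `P`-null frontier with asymptotic frequency its measure. -/
lemma tendsto_frequency_of_tendsto_charFun (v : ℕ → ℝ) (P : Measure ℝ) [IsProbabilityMeasure P]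
    (h : ∀ t : ℝ, Tendsto (fun n : ℕ => (n⁻¹ : ℝ) •
      ∑ k ∈ Finset.range n, Complex.exp (t * v k * Complex.I)) atTop (𝓝 (charFun P t)))
    {s : Set ℝ} (hs : MeasurableSet s) (hfr : P (frontier s) = 0) :
    Tendsto (fun n : ℕ => (n⁻¹ : ℝ) * ∑ k ∈ Finset.range n, s.indicator 1 (v k)) atTop
      (𝓝 (P.real s)) := by
  let μ : ℕ → Measure ℝ := fun n =>
    ENNReal.ofReal ((n + 1 : ℕ)⁻¹ : ℝ) • ∑ k ∈ Finset.range (n + 1), Measure.dirac (v k)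
  have hμ : ∀ n, IsProbabilityMeasure (μ n) := fun n => ⟨by
    have : ((n : ENNReal) + 1) ≠ 0 := by positivity
    simp only [μ, Measure.smul_apply, Measure.finsetSum_apply, measure_univ, smul_eq_mul]
    rw [ENNReal.ofReal_inv_of_pos (by positivity), ENNReal.ofReal_natCast]
    simpa using ENNReal.inv_mul_cancel this (by finiteness)⟩
  have hchar : ∀ n (t : ℝ), charFun (μ n) t = (((n + 1 : ℕ) : ℝ)⁻¹) •
      ∑ k ∈ Finset.range (n + 1), Complex.exp (t * v k * Complex.I) := fun n t => by
    rw [charFun_apply_real, integral_smul_measure, ENNReal.toReal_ofReal (by positivity),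
      integral_finsetSum_measure]
    · simp
    · intro i _
      exact integrable_dirac (by simp)
  have hlim : Tendsto (β := ProbabilityMeasure ℝ) (fun n => ⟨μ n, hμ n⟩) atTop
      (𝓝 ⟨P, inferInstance⟩) := by
    refine ProbabilityMeasure.tendsto_of_tendsto_charFun fun t => ?_
    simp only [ProbabilityMeasure.coe_mk, hchar]
    exact (tendsto_add_atTop_iff_nat (f := fun n : ℕ => (n⁻¹ : ℝ) •
      ∑ k ∈ Finset.range n, Complex.exp (t * v k * Complex.I)) 1).2 (h t)
  have hmeas := ProbabilityMeasure.tendsto_measure_of_null_frontier_of_tendsto' hlim hfr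
  rw [← tendsto_add_atTop_iff_nat 1]
  refine ((ENNReal.tendsto_toReal (measure_ne_top P s)).comp hmeas).congr fun n => ?_
  simp only [Function.comp_apply, ProbabilityMeasure.coe_mk, μ, Measure.smul_apply,
    Measure.finsetSum_apply, smul_eq_mul, ENNReal.toReal_mul, Measure.dirac_apply' _ hs]
  rw [ENNReal.toReal_ofReal (by positivity), ENNReal.toReal_sum fun k _ => by
    by_cases hk : v k ∈ s <;> simp [hk]]
  congr 1
  refine Finset.sum_congr rfl fun k _ => ?_
  by_cases hk : v k ∈ s <;> simp [hk]

/-- The uniform probability measure on angles in `[0, 2π]`. -/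
noncomputable def uniformAngle : Measure ℝ :=
  (ENNReal.ofReal (2 * Real.pi))⁻¹ • volume.restrict (Set.Icc 0 (2 * Real.pi))

instance : IsProbabilityMeasure uniformAngle := ⟨by
  have : 0 < Real.pi := Real.pi_pos
  simp only [uniformAngle, Measure.smul_apply, Measure.restrict_apply_univ, Real.volume_Icc,
    sub_zero, smul_eq_mul]
  exact ENNReal.inv_mul_cancel (by simpa using this) (by finiteness)⟩

lemma pi_uniformAngle (d : ℕ) :
    Measure.pi (fun _ : Fin d => uniformAngle) = (ENNReal.ofReal (2 * Real.pi))⁻¹ ^ d •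
      volume.restrict (Set.univ.pi fun _ => Set.Icc 0 (2 * Real.pi)) := by
  refine Measure.pi_eq fun s hs => ?_
  rw [volume_pi, Measure.restrict_pi_pi, Measure.smul_apply, Measure.pi_pi]
  simp [uniformAngle, Finset.prod_mul_distrib]

lemma integral_exp_uniformAngle {m : ℤ} (hm : m ≠ 0) :
    ∫ y, Complex.exp (m * y * Complex.I) ∂uniformAngle = 0 := by
  have hmI : (m * Complex.I : ℂ) ≠ 0 := by simp [hm]
  have hexp : Complex.exp (m * Complex.I * (2 * Real.pi)) = 1 := by
    rw [← Complex.exp_int_mul_two_pi_mul_I m]; ring_nf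
  have hint := integral_exp_mul_complex (a := 0) (b := 2 * Real.pi) hmI
  rw [intervalIntegral.integral_of_le (by positivity), ← integral_Icc_eq_integral_Ioc] at hint
  rw [uniformAngle, integral_smul_measure]
  simp_rw [mul_right_comm _ _ Complex.I]
  rw [hint]
  simp [hexp]

/-- The point of the torus `(ℝ/ℤ)^d` with the given angles. -/
noncomputable def torusOfAngles {d : ℕ} (y : Fin d → ℝ) : UnitAddTorus (Fin d) :=
  fun j => ((y j / (2 * Real.pi) : ℝ) : UnitAddCircle)

lemma continuous_torusOfAngles {d : ℕ} : Continuous (torusOfAngles (d := d)) :=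
  continuous_pi fun j => (AddCircle.continuous_mk' 1).comp (by fun_prop)

lemma fourier_angle (m : ℤ) (y : ℝ) :
    fourier m ((y / (2 * Real.pi) : ℝ) : UnitAddCircle) = Complex.exp (m * y * Complex.I) := by
  rw [fourier_coe_apply]
  congr 1
  have : (Real.pi : ℂ) ≠ 0 := by exact_mod_cast Real.pi_ne_zero
  push_cast
  field_simp

lemma mFourier_torusOfAngles {d : ℕ} (m : Fin d → ℤ) (y : Fin d → ℝ) :
    UnitAddTorus.mFourier m (torusOfAngles y) = ∏ j, Complex.exp (m j * y j * Complex.I) := by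
  simp [UnitAddTorus.mFourier, torusOfAngles, fourier_angle, -fourier_apply]

/-- Kronecker–Weyl: if `π, θ_1, …, θ_d` are linearly independent over `ℚ`, the points
with angles `kθ_j + ω_j` are equidistributed in the torus. -/
lemma tendsto_average_torusOfAngles {d : ℕ} (θ ω : Fin d → ℝ)
    (hθ : LinearIndependent ℚ (Fin.cons Real.pi θ : Fin (d + 1) → ℝ))
    (f : C(UnitAddTorus (Fin d), ℂ)) :
    Tendsto (fun n : ℕ => (n⁻¹ : ℝ) • ∑ k ∈ Finset.range n,
        f (torusOfAngles fun j => (k + 1 : ℕ) * θ j + ω j)) atTop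
      (𝓝 (∫ y, f (torusOfAngles y) ∂Measure.pi fun _ => uniformAngle)) := by
  refine tendsto_average_of_span_dense _ torusOfAngles (fun f => ?_) _
    UnitAddTorus.span_mFourier_closure_eq_top ?_ f
  · exact .of_bound (f.continuous.comp continuous_torusOfAngles).aestronglyMeasurable ‖f‖
      (.of_forall fun y => f.norm_coe_le_norm _)
  rintro _ ⟨m, rfl⟩
  simp_rw [mFourier_torusOfAngles]
  rw [integral_fintype_prod_eq_prod (𝕜 := ℂ)
    (f := fun j (y : ℝ) => Complex.exp (m j * y * Complex.I))]
  by_cases hm : m = 0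
  · subst hm
    refine tendsto_const_nhds.congr' ?_
    filter_upwards [eventually_ne_atTop 0] with n hn
    simp [hn]
  obtain ⟨j, hj⟩ := Function.ne_iff.1 hm
  rw [Finset.prod_eq_zero (Finset.mem_univ j) (integral_exp_uniformAngle hj)]
  set a : ℝ := ∑ j, m j * θ j with ha
  have hz1 : Complex.exp (a * Complex.I) ≠ 1 := by
    intro h
    obtain ⟨N, hN⟩ := Complex.exp_eq_one_iff.1 h
    have hN' : a = N * (2 * Real.pi) := by
      have : (a : ℂ) = N * (2 * Real.pi) := by
        apply mul_right_cancel₀ Complex.I_ne_zero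
        rw [hN]; ring
      exact_mod_cast this
    have := Fintype.linearIndependent_iff.1 hθ
      (Fin.cons (-2 * N : ℚ) fun j => (m j : ℚ)) (by
        simp only [Fin.sum_univ_succ, Fin.cons_zero, Fin.cons_succ, Rat.smul_def]
        push_cast
        rw [← ha, hN']; ring) j.succ
    exact hj (by simpa using this)
  have hlim := (tendsto_average_pow_zero (Complex.norm_exp_ofReal_mul_I a) hz1).const_mul
    (∏ j, Complex.exp (m j * (θ j + ω j) * Complex.I))
  rw [mul_zero] at hlim
  refine hlim.congr fun n => ?_
  rw [mul_smul_comm, Finset.mul_sum]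
  congr 1
  refine Finset.sum_congr rfl fun k _ => ?_
  rw [← Complex.exp_nat_mul, ← Complex.exp_sum, ← Complex.exp_sum, ← Complex.exp_add, ha]
  congr 1
  push_cast
  rw [Finset.sum_mul, Finset.mul_sum, ← Finset.sum_add_distrib]
  exact Finset.sum_congr rfl fun j _ => by ring

lemma countable_sin_eq (c : ℝ) : {t : ℝ | Real.sin t = c}.Countable := by
  rcases Set.eq_empty_or_nonempty {t : ℝ | Real.sin t = c} with h | ⟨t₀, ht₀⟩
  · simp [h]
  refine ((Set.countable_range fun k : ℤ => 2 * k * Real.pi + t₀).union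
    (Set.countable_range fun k : ℤ => (2 * k + 1) * Real.pi - t₀)).mono fun t ht => ?_
  obtain ⟨k, hk | hk⟩ := Real.sin_eq_sin_iff.1 (ht₀.trans (Eq.symm ht) : Real.sin t₀ = Real.sin t)
  · exact .inl ⟨k, hk.symm⟩
  · exact .inr ⟨k, hk.symm⟩

/-- A nonconstant affine combination of sines of the coordinates, or a nonzero constant, vanishes
only on a null set. -/
lemma volume_sin_sum_eq_zero {d : ℕ} (α : ℝ) (β : Fin d → ℝ) (hnz : α ≠ 0 ∨ ∃ j, β j ≠ 0) :
    volume {y : Fin d → ℝ | α + ∑ j, β j * Real.sin (y j) = 0} = 0 := by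
  by_cases hβ : ∃ j, β j ≠ 0
  · obtain ⟨i, hi⟩ := hβ
    have hmeas : MeasurableSet {y : Fin d → ℝ | α + ∑ j, β j * Real.sin (y j) = 0}ᶜ :=
      (measurableSet_eq_fun (by fun_prop) (by fun_prop)).compl
    refine measure_eq_zero_iff_ae_notMem.2 <| ae_mem_of_ae_add_linearMap_mem
      (LinearMap.single ℝ (fun _ : Fin d => ℝ) i) volume volume hmeas fun y => ?_
    set c := α + ∑ j ∈ Finset.univ.erase i, β j * Real.sin (y j) with hc
    have hcount : {t : ℝ | Real.sin (y i + t) = -c / β i}.Countable :=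
      (countable_sin_eq (-c / β i)).preimage (add_right_injective (y i))
    filter_upwards [hcount.ae_notMem volume] with t ht h0
    refine ht ?_
    rw [← Finset.add_sum_erase _ _ (Finset.mem_univ i), Finset.sum_congr rfl (g := fun j =>
      β j * Real.sin (y j)) fun j hj => by simp [Finset.ne_of_mem_erase hj]] at h0
    simp only [Pi.add_apply, LinearMap.single_apply, Pi.single_eq_same] at h0
    rw [eq_div_iff hi]
    linarith
  · push Not at hβ
    have hα : α ≠ 0 := hnz.resolve_right (by simpa using hβ)
    simp [hβ, hα]

/-- If `u` is bounded in norm by `1`, multiplying it by a sequence tending to `1` does not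
change the limit of its Cesàro averages. -/
lemma tendsto_average_mul_of_tendsto_one {u w : ℕ → ℂ} {l : ℂ} (hu : ∀ k, ‖u k‖ ≤ 1)
    (hw : Tendsto w atTop (𝓝 1))
    (h : Tendsto (fun n : ℕ => (n⁻¹ : ℝ) • ∑ k ∈ Finset.range n, u k) atTop (𝓝 l)) :
    Tendsto (fun n : ℕ => (n⁻¹ : ℝ) • ∑ k ∈ Finset.range n, u k * w k) atTop (𝓝 l) := by
  have hdiff : Tendsto (fun k => u k * (w k - 1)) atTop (𝓝 0) := by
    refine squeeze_zero_norm (a := fun k => ‖w k - 1‖) (fun k => ?_) ?_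
    · rw [norm_mul]
      exact mul_le_of_le_one_left (norm_nonneg _) (hu k)
    · simpa using (hw.sub_const 1).norm
  have := h.add hdiff.cesaro_smul
  rw [add_zero] at this
  refine this.congr fun n => ?_
  rw [← smul_add, ← Finset.sum_add_distrib]
  congr 1
  exact Finset.sum_congr rfl fun k _ => by ring

/-- Characteristic functions of the values of `α + ∑ β_j sin` along an equidistributed orbit. -/
lemma tendsto_average_exp_sin_sum {d : ℕ} (θ β ω : Fin d → ℝ) (α t : ℝ)
    (hθ : LinearIndependent ℚ (Fin.cons Real.pi θ : Fin (d + 1) → ℝ)) :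
    Tendsto (fun n : ℕ => (n⁻¹ : ℝ) • ∑ k ∈ Finset.range n,
        Complex.exp (t * (α + ∑ j, β j * Real.sin ((k + 1 : ℕ) * θ j + ω j) : ℝ) * Complex.I))
      atTop (𝓝 (∫ y : Fin d → ℝ, Complex.exp (t * (α + ∑ j, β j * Real.sin (y j) : ℝ) * Complex.I)
        ∂Measure.pi fun _ => uniformAngle)) := by
  let f : C(UnitAddTorus (Fin d), ℂ) :=
    ⟨fun x => Complex.exp (t * (α + ∑ j, β j * (fourier 1 (x j)).im : ℝ) * Complex.I), by fun_prop⟩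
  have hf : ∀ y : Fin d → ℝ, f (torusOfAngles y) =
      Complex.exp (t * (α + ∑ j, β j * Real.sin (y j) : ℝ) * Complex.I) := fun y => by
    simp only [f, ContinuousMap.coe_mk, torusOfAngles, fourier_angle, Int.cast_one, one_mul,
      Complex.exp_ofReal_mul_I_im]
  simpa only [hf] using tendsto_average_torusOfAngles θ ω hθ f

open scoped Classical in
/-- (Equidistribution density computation.) If `π, θ_1, …, θ_d` are linearly
independent over `ℚ`, `α ≠ 0` or some `β_j ≠ 0`, and `x_k → 0`, then the natural density of
`{k : α + ∑_j β_j sin(kθ_j + ω_j) > x_k}` exists and equals the normalized Lebesgue measure of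
`{y ∈ [0,2π]^d : α + ∑_j β_j sin(y_j) > 0}`. -/
theorem density_sin_sum (d : ℕ) (hd : 1 ≤ d) (θ : Fin d → ℝ)
    (hGSH : LinearIndependent ℚ (Fin.cons Real.pi θ : Fin (d + 1) → ℝ))
    (α : ℝ) (β ω : Fin d → ℝ) (hnz : α ≠ 0 ∨ ∃ j, β j ≠ 0)
    (x : ℕ → ℝ) (hx : Tendsto x atTop (nhds 0)) :
    Tendsto (fun n : ℕ =>
        (((Finset.Icc 1 n).filter fun k =>
            x k < α + ∑ j, β j * Real.sin (k * θ j + ω j)).card : ℝ) / n)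
      atTop
      (nhds ((volume {y : Fin d → ℝ |
          (∀ j, y j ∈ Set.Icc (0 : ℝ) (2 * Real.pi)) ∧
            0 < α + ∑ j, β j * Real.sin (y j)}).toReal / (2 * Real.pi) ^ d)) := by
  let F : (Fin d → ℝ) → ℝ := fun y => α + ∑ j, β j * Real.sin (y j)
  have hF : Measurable F := by fun_prop
  let ν : Measure (Fin d → ℝ) := Measure.pi fun _ => uniformAngle
  have hP : IsProbabilityMeasure (ν.map F) := Measure.isProbabilityMeasure_map hF.aemeasurable
  have hchar (t : ℝ) := tendsto_average_mul_of_tendsto_one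
    (w := fun k => Complex.exp (-(t * x (k + 1) * Complex.I)))
    (fun k => by rw [← Complex.ofReal_mul, Complex.norm_exp_ofReal_mul_I])
    (by
      have hx' : Tendsto (fun k => (x (k + 1) : ℂ)) atTop (𝓝 0) := by
        exact_mod_cast (Complex.continuous_ofReal.tendsto 0).comp
          ((tendsto_add_atTop_iff_nat 1).2 hx)
      simpa using ((hx'.const_mul (t : ℂ)).mul_const Complex.I).neg.cexp)
    (tendsto_average_exp_sin_sum θ β ω α t hGSH)
  have hfreq := tendsto_frequency_of_tendsto_charFun
    (fun k => F (fun j => (k + 1 : ℕ) * θ j + ω j) - x (k + 1)) (ν.map F) (fun t => by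
      rw [charFun_apply_real, integral_map hF.aemeasurable (by fun_prop)]
      refine (hchar t).congr fun n => ?_
      congr 1
      refine Finset.sum_congr rfl fun k _ => ?_
      rw [← Complex.exp_add]
      congr 1
      simp only [F]
      push_cast
      ring) measurableSet_Ioi (s := Set.Ioi 0) (by
      rw [frontier_Ioi, Measure.map_apply hF (measurableSet_singleton 0)]
      simp only [ν, pi_uniformAngle, Measure.smul_apply, smul_eq_mul]
      exact mul_eq_zero_of_right _
        (Measure.restrict_le_self.absolutelyContinuous (volume_sin_sum_eq_zero α β hnz)))
  have hmeasure : (ν.map F).real (Set.Ioi 0) = (volume {y : Fin d → ℝ |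
      (∀ j, y j ∈ Set.Icc (0 : ℝ) (2 * Real.pi)) ∧
        0 < α + ∑ j, β j * Real.sin (y j)}).toReal / (2 * Real.pi) ^ d := by
    rw [measureReal_def, Measure.map_apply hF measurableSet_Ioi]
    simp only [ν, pi_uniformAngle, Measure.smul_apply, smul_eq_mul]
    rw [Measure.restrict_apply (hF measurableSet_Ioi), ENNReal.toReal_mul, ENNReal.toReal_pow,
      ENNReal.toReal_inv, ENNReal.toReal_ofReal (by positivity), inv_pow, inv_mul_eq_div]
    congr 3
    ext y
    simp only [Set.mem_inter_iff, Set.mem_preimage, Set.mem_Ioi, Set.mem_univ_pi]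
    exact and_comm
  rw [← hmeasure]
  refine hfreq.congr fun n => ?_
  rw [div_eq_inv_mul, Finset.card_filter, Nat.cast_sum, ← Finset.Ico_add_one_right_eq_Icc,
    ← Finset.sum_Ico_add' _ 0 n 1, Nat.Ico_zero_eq_range]
  congr 1
  refine Finset.sum_congr rfl fun k _ => ?_
  simp [Set.indicator_apply, F]
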